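/- arXiv:2010.08244 — 7 statements merged into one kernel-verified Lean document; each statement's English description precedes it below -/
import Mathlib

section
/- Under Assumption 1, suppose α*, α̂ ∈ A are such that α̂ minimizes f over A (i.e., f(α̂) ≤ f(α) for all α ∈ A), Assumption 2 holds at α*, namely f_u(α*) ≤ −log(C₄/γ₁), and γ₂ ≤ min(C₃/e, C₄/e). Then KL_{α̂} ≤ KL_{α*} + (2·γ₂²/C₅)·log(C₆/γ₂). -/
open MeasureTheory Real

lemma aux_mono (C x y : ℝ) (hx : 0 < x) (hxy : x ≤ y) (hy : y ≤ C / Real.exp 1) :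
    1 ≤ Real.log (C / y) ∧ x * Real.log (C / x) ≤ y * Real.log (C / y) := by
  have hy0 : 0 < y := lt_of_lt_of_le hx hxy
  have he := Real.exp_pos 1
  have h1 : y * Real.exp 1 ≤ C := (le_div_iff₀ he).1 hy
  have hC : 0 < C := lt_of_lt_of_le (by positivity) h1
  have hL : 1 ≤ Real.log (C / y) := by
    rw [Real.le_log_iff_exp_le (by positivity), le_div_iff₀ hy0]
    linarith
  refine ⟨hL, ?_⟩
  have e : Real.log (C / x) = Real.log (C / y) + Real.log (y / x) := by
    rw [← Real.log_mul (by positivity) (by positivity)]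
    congr 1
    field_simp
  have h2 : Real.log (y / x) ≤ y / x - 1 := Real.log_le_sub_one_of_pos (by positivity)
  have h3 : x * Real.log (y / x) ≤ y - x := by
    calc x * Real.log (y / x) ≤ x * (y / x - 1) := by gcongr
      _ = y - x := by field_simp
  rw [e]
  nlinarith

lemma aux_up (a b c : ℝ) (ha : 0 ≤ a) (hb : 0 < b) (hc : 0 < c) :
    a * b * Real.log (a / b) ≤ a ^ 2 / c - a * b + a * b * Real.log c := by
  rcases ha.eq_or_lt with h | h
  · simp [← h]
  · have h2 : Real.log (a / b / c) ≤ a / b / c - 1 := Real.log_le_sub_one_of_pos (by positivity)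
    rw [Real.log_div (by positivity) (by positivity)] at h2
    calc a * b * Real.log (a / b) ≤ a * b * (a / b / c - 1 + Real.log c) := by
          gcongr; linarith
      _ = _ := by field_simp

lemma aux_lo (a b c : ℝ) (ha : 0 ≤ a) (hb : 0 < b) (hc : 0 < c) :
    -(b ^ 2 / c - a * b + a * b * Real.log c) ≤ a * b * Real.log (a / b) := by
  rcases ha.eq_or_lt with h | h
  · simp [← h]; positivity
  · have := aux_up b a c hb.le h hc
    rw [← inv_div a b, Real.log_inv] at this
    nlinarith

lemma aux_real (C₁ C₂ C₃ C₄ g₁ g₂ ks kh Zs Zh bs bh : ℝ) (hC₁ : C₁ ≤ 0) (hC₂ : 0 < C₂)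
    (hC₃ : 0 < C₃) (hC₄ : 0 < C₄) (hg₁ : 0 < g₁)
    (hbs1 : g₁ ≤ bs) (hbs2 : bs ≤ g₂) (hbh1 : g₁ ≤ bh)
    (hZs : Zs = C₂ * Real.exp (-ks)) (hZh : Zh = C₂ * Real.exp (-kh)) (hks : 0 ≤ ks)
    (h3 : g₂ ≤ C₃ / Real.exp 1) (h4 : g₂ ≤ C₄ / Real.exp 1)
    (hA : (Zs * (ks + C₁) + bs * Real.log (C₃ / bs)) / (Zs + bs) ≤ - Real.log (C₄ / g₁))
    (hm : (Zh * (kh + C₁) - bh * Real.log (C₄ / bh)) / (Zh + bh) ≤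
      (Zs * (ks + C₁) + bs * Real.log (C₃ / bs)) / (Zs + bs)) :
    kh ≤ ks + 2 * g₂ ^ 2 / (C₄ * C₂ * Real.exp C₁) *
      Real.log (Real.sqrt (C₃ * C₄ * Real.exp (-C₁)) / g₂) := by
  have hbs : 0 < bs := by linarith
  have hbh : 0 < bh := by linarith
  have hg₂ : 0 < g₂ := by linarith
  have hZs0 : 0 < Zs := by rw [hZs]; positivity
  have hZh0 : 0 < Zh := by rw [hZh]; positivity
  have hlog : 2 * Real.log (Real.sqrt (C₃ * C₄ * Real.exp (-C₁)) / g₂)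
      = Real.log (C₃ / g₂) + Real.log (C₄ / g₂) - C₁ := by
    rw [Real.log_div (by positivity) (by positivity), Real.log_sqrt (by positivity),
      Real.log_mul (by positivity) (by positivity), Real.log_mul (by positivity) (by positivity),
      Real.log_exp, Real.log_div (by positivity) (by positivity),
      Real.log_div (by positivity) (by positivity)]
    ring
  obtain ⟨hL3, hmono3⟩ := aux_mono C₃ bs g₂ hbs hbs2 h3
  obtain ⟨hL4, -⟩ := aux_mono C₄ bs g₂ hbs hbs2 h4
  obtain ⟨hLs, -⟩ := aux_mono C₃ bs bs hbs le_rfl (hbs2.trans h3)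
  obtain ⟨hLg1, -⟩ := aux_mono C₄ g₁ g₁ hg₁ le_rfl ((hbs1.trans hbs2).trans h4)
  have hll : Real.log (C₄ / bh) ≤ Real.log (C₄ / g₁) := by
    apply Real.log_le_log (by positivity)
    gcongr
  -- the key bound for the minimizer
  set F := (Zs * (ks + C₁) + bs * Real.log (C₃ / bs)) / (Zs + bs) with hF
  have hF' : Zs * (ks + C₁) + bs * Real.log (C₃ / bs) = F * (Zs + bs) := by
    rw [hF]; field_simp
  rw [div_le_iff₀ (by positivity)] at hm
  have hkh : kh + C₁ ≤ - Real.log (C₄ / bh) := by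
    have : Zh * (kh + C₁) ≤ Zh * (- Real.log (C₄ / bh)) := by
      have : F * (Zh + bh) ≤ (- Real.log (C₄ / bh)) * (Zh + bh) := by
        gcongr; linarith
      nlinarith
    exact le_of_mul_le_mul_left this hZh0
  have hkF : kh + C₁ ≤ F := by
    have : (kh + C₁) * (Zh + bh) ≤ F * (Zh + bh) := by nlinarith
    exact le_of_mul_le_mul_right this (by positivity)
  -- the bound at the reference index
  have hks1 : ks + C₁ ≤ - Real.log (C₄ / g₁) := by
    have h : Zs * (ks + C₁) ≤ Zs * (- Real.log (C₄ / g₁)) := by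
      have : F * (Zs + bs) ≤ (- Real.log (C₄ / g₁)) * (Zs + bs) := by gcongr
      nlinarith
    exact le_of_mul_le_mul_left h hZs0
  have hZbig : C₄ * C₂ * Real.exp C₁ ≤ Zs * g₁ := by
    have h1 : Real.log (C₄ / g₁) + C₁ ≤ -ks := by linarith
    have h2 := Real.exp_le_exp.2 h1
    rw [Real.exp_add, Real.exp_log (by positivity)] at h2
    rw [hZs]
    have h3 : C₄ / g₁ * Real.exp C₁ * (C₂ * g₁) ≤ Real.exp (-ks) * (C₂ * g₁) := by gcongr
    calc C₄ * C₂ * Real.exp C₁ = C₄ / g₁ * Real.exp C₁ * (C₂ * g₁) := by field_simp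
      _ ≤ _ := h3
      _ = _ := by ring
  have hFk : (F - (ks + C₁)) * Zs ≤ g₂ * (Real.log (C₃ / g₂) - C₁) := by
    have e : (F - (ks + C₁)) * Zs = bs * Real.log (C₃ / bs) - bs * F := by linarith
    have hF0 : C₁ ≤ F := by
      have h1 : C₁ * (Zs + bs) ≤ F * (Zs + bs) := by
        rw [← hF']
        have u1 : 0 ≤ Zs * ks := by positivity
        have u2 : bs * C₁ ≤ bs * Real.log (C₃ / bs) :=
          mul_le_mul_of_nonneg_left (by linarith) hbs.le
        linarith
      exact le_of_mul_le_mul_right h1 (by positivity)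
    have v1 : bs * C₁ ≤ bs * F := mul_le_mul_of_nonneg_left hF0 hbs.le
    have v2 : g₂ * C₁ ≤ bs * C₁ := mul_le_mul_of_nonpos_right hbs2 hC₁
    rw [e]
    linarith
  have hP : 0 < C₄ * C₂ * Real.exp C₁ := by positivity
  have hfin : kh - ks ≤ g₂ ^ 2 / (C₄ * C₂ * Real.exp C₁) *
      (Real.log (C₃ / g₂) + Real.log (C₄ / g₂) - C₁) := by
    set P := C₄ * C₂ * Real.exp C₁
    have hX : 0 ≤ Real.log (C₃ / g₂) - C₁ := by linarith
    rw [div_mul_eq_mul_div, le_div_iff₀ hP]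
    rcases le_or_gt (kh - ks) 0 with hn | hn
    · have : 0 ≤ g₂ ^ 2 * (Real.log (C₃ / g₂) + Real.log (C₄ / g₂) - C₁) := by
        apply mul_nonneg (by positivity); linarith
      nlinarith
    · calc (kh - ks) * P ≤ (kh - ks) * (Zs * g₁) := by gcongr
        _ ≤ (F - (ks + C₁)) * (Zs * g₁) :=
            mul_le_mul_of_nonneg_right (by linarith) (by positivity)
        _ = ((F - (ks + C₁)) * Zs) * g₁ := by ring
        _ ≤ (g₂ * (Real.log (C₃ / g₂) - C₁)) * g₁ := by gcongr
        _ ≤ (g₂ * (Real.log (C₃ / g₂) - C₁)) * g₂ := by gcongr; linarith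
        _ ≤ (g₂ * (Real.log (C₃ / g₂) + Real.log (C₄ / g₂) - C₁)) * g₂ := by
            gcongr; linarith
        _ = _ := by ring
  rw [← hlog] at hfin
  have : 2 * g₂ ^ 2 / (C₄ * C₂ * Real.exp C₁) *
      Real.log (Real.sqrt (C₃ * C₄ * Real.exp (-C₁)) / g₂) = g₂ ^ 2 / (C₄ * C₂ * Real.exp C₁) *
      (2 * Real.log (Real.sqrt (C₃ * C₄ * Real.exp (-C₁)) / g₂)) := by ring
  linarith

/-- **Theorem 1 (full version).** Under Assumption 1 (the main-task likelihood `pm` and every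
surrogate prior `p α` are constant on the small support set `S` of the uniform true prior
`pstar`), if `α̂` minimizes the surrogate objective `f` over `A`, Assumption 2 holds at `α*`
(`f_u(α*) ≤ −log(C₄/γ₁)`), and `γ₂ ≤ min(C₃/e, C₄/e)`, then
`KL_{α̂} ≤ KL_{α*} + (2γ₂²/C₅)·log(C₆/γ₂)`. -/
theorem arml_theorem_full_version
    {Ω : Type*} [MeasurableSpace Ω] (μ : Measure Ω)
    (S : Set Ω) (hSmeas : MeasurableSet S) (hS0 : 0 < μ S) (hSfin : μ S < ⊤)
    (pstar : Ω → ℝ)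
    (hpstar_in : ∀ θ ∈ S, pstar θ = ((μ S).toReal)⁻¹)
    (hpstar_out : ∀ θ ∉ S, pstar θ = 0)
    (pm : Ω → ℝ) (hpm_meas : Measurable pm) (hpm_nonneg : ∀ θ, 0 ≤ pm θ)
    {A : Type*} [Nonempty A]
    (p : A → Ω → ℝ) (hp_meas : ∀ a, Measurable (p a))
    (hp_pos : ∀ a θ, 0 < p a θ)
    (hp_dens : ∀ a, ∫ θ, p a θ ∂μ = 1)
    -- Assumption 1: `pm` and every `p α` are constant on `S`
    (hpm_constS : ∀ θ ∈ S, ∀ θ' ∈ S, pm θ = pm θ')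
    (hp_constS : ∀ a, ∀ θ ∈ S, ∀ θ' ∈ S, p a θ = p a θ')
    (θs : Ω) (hθsS : θs ∈ S) (hθs_pos : 0 < pm θs)
    (C₁ C₂ : ℝ) (hC₂ : C₂ = pm θs) (hC₁ : C₁ = Real.log (pm θs / pstar θs))
    (hC₁_nonpos : C₁ ≤ 0)
    (KL : A → ℝ) (hKL : ∀ a, KL a = Real.log (pstar θs / p a θs))
    (ZS ZSb : A → ℝ)
    (hZS : ∀ a, ZS a = ∫ θ in S, pm θ * p a θ ∂μ)
    (hZSb : ∀ a, ZSb a = ∫ θ in Sᶜ, pm θ * p a θ ∂μ)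
    (hZSb_int : ∀ a, IntegrableOn (fun θ => pm θ * p a θ) Sᶜ μ)
    (hZSb_pos : ∀ a, 0 < ZSb a)
    (γ₁ γ₂ : ℝ) (hγ₁ : IsGLB (Set.range ZSb) γ₁) (hγ₁_pos : 0 < γ₁)
    (hγ₂ : IsLUB (Set.range ZSb) γ₂)
    (C₃ : ℝ) (hC₃ : C₃ = ∫ θ in Sᶜ, (pm θ) ^ 2 ∂μ)
    (hC₃_int : IntegrableOn (fun θ => (pm θ) ^ 2) Sᶜ μ)
    (hC₃_pos : 0 < C₃)
    (C₄ : ℝ)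
    (hC₄_int : ∀ a, IntegrableOn (fun θ => (p a θ) ^ 2) Sᶜ μ)
    (hC₄ : IsLUB (Set.range fun a => ∫ θ in Sᶜ, (p a θ) ^ 2 ∂μ) C₄)
    (hC₄_pos : 0 < C₄)
    (C₅ C₆ : ℝ) (hC₅ : C₅ = C₄ * C₂ * Real.exp C₁)
    (hC₆ : C₆ = Real.sqrt (C₃ * C₄ * Real.exp (-C₁)))
    (f fu fl : A → ℝ)
    (hf_int : ∀ a,
      Integrable (fun θ => pm θ * p a θ * Real.log (pm θ / p a θ)) μ)
    (hf : ∀ a, f a = (ZS a + ZSb a)⁻¹ *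
      ∫ θ, pm θ * p a θ * Real.log (pm θ / p a θ) ∂μ)
    (hfu : ∀ a, fu a = (ZS a * (KL a + C₁) + ZSb a * Real.log (C₃ / ZSb a)) /
      (ZS a + ZSb a))
    (hfl : ∀ a, fl a = (ZS a * (KL a + C₁) - ZSb a * Real.log (C₄ / ZSb a)) /
      (ZS a + ZSb a))
    (αs αh : A)
    (hαh_min : ∀ a, f αh ≤ f a)
    -- Assumption 2 at α*
    (hA2 : fu αs ≤ - Real.log (C₄ / γ₁))
    (hγ₂C₃ : γ₂ ≤ C₃ / Real.exp 1) (hγ₂C₄ : γ₂ ≤ C₄ / Real.exp 1) :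
    KL αh ≤ KL αs + 2 * γ₂ ^ 2 / C₅ * Real.log (C₆ / γ₂) := by
  have hm : 0 < (μ S).toReal := ENNReal.toReal_pos hS0.ne' hSfin.ne
  have hps : pstar θs = ((μ S).toReal)⁻¹ := hpstar_in θs hθsS
  have hps0 : 0 < pstar θs := by rw [hps]; positivity
  have hreal : μ.real S = (μ S).toReal := rfl
  have hC₂0 : 0 < C₂ := hC₂ ▸ hθs_pos
  have hpSint : ∀ a, ∫ θ in S, p a θ ∂μ = (μ S).toReal * p a θs := by
    intro a
    rw [setIntegral_congr_fun hSmeas (fun θ hθ => hp_constS a θ hθ θs hθsS)]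
    simp [hreal]
  have hKLpos : ∀ a, 0 ≤ KL a := by
    intro a
    have hint : Integrable (p a) μ := by
      by_contra h
      have := hp_dens a
      rw [integral_undef h] at this
      norm_num at this
    have h1 : ∫ θ in S, p a θ ∂μ ≤ ∫ θ, p a θ ∂μ :=
      setIntegral_le_integral hint (Filter.Eventually.of_forall fun θ => (hp_pos a θ).le)
    rw [hpSint, hp_dens] at h1
    rw [hKL, hps]
    apply Real.log_nonneg
    rw [le_div_iff₀ (hp_pos a θs), one_mul, ← one_div, le_div_iff₀ hm]
    linarith
  have hZSe : ∀ a, ZS a = C₂ * Real.exp (-KL a) := by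
    intro a
    have hpa := hp_pos a θs
    rw [hZS, hKL, ← Real.log_inv, Real.exp_log (by positivity), hps, hC₂,
      setIntegral_congr_fun hSmeas (g := fun _ => pm θs * p a θs)
        (fun θ hθ => by simp only [hp_constS a θ hθ θs hθsS, hpm_constS θ hθ θs hθsS])]
    simp [hreal]
    ring
  have hZS0 : ∀ a, 0 < ZS a := by intro a; rw [hZSe]; positivity
  have hSpart : ∀ a, ∫ θ in S, pm θ * p a θ * Real.log (pm θ / p a θ) ∂μ
      = ZS a * (KL a + C₁) := by
    intro a
    have hpa := hp_pos a θs
    have e : KL a + C₁ = Real.log (pm θs / p a θs) := by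
      rw [hKL, hC₁, ← Real.log_mul (by positivity) (by positivity)]
      congr 1
      field_simp
    rw [e, hZS, ← integral_mul_const]
    exact setIntegral_congr_fun hSmeas
        (fun θ hθ => by simp only [hp_constS a θ hθ θs hθsS, hpm_constS θ hθ θs hθsS])
  have hsplit : ∀ a, f a = (ZS a * (KL a + C₁) +
      ∫ θ in Sᶜ, pm θ * p a θ * Real.log (pm θ / p a θ) ∂μ) / (ZS a + ZSb a) := by
    intro a
    rw [hf, ← integral_add_compl hSmeas (hf_int a), hSpart, div_eq_inv_mul]
  have hgs : ∀ a, γ₁ ≤ ZSb a := fun a => hγ₁.1 ⟨a, rfl⟩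
  have hgl : ∀ a, ZSb a ≤ γ₂ := fun a => hγ₂.1 ⟨a, rfl⟩
  have hup : ∀ a, f a ≤ fu a := by
    intro a
    have hb := hZSb_pos a
    have hz := hZS0 a
    rw [hsplit, hfu]
    gcongr
    have hc : 0 < C₃ / ZSb a := by positivity
    have i1 := hC₃_int.div_const (C₃ / ZSb a)
    have i2 := hZSb_int a
    have i12 := i1.sub i2
    simp only [Pi.sub_def] at i12
    have i3 := i2.mul_const (Real.log (C₃ / ZSb a))
    calc _ ≤ ∫ θ in Sᶜ, (pm θ ^ 2 / (C₃ / ZSb a) - pm θ * p a θ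
          + pm θ * p a θ * Real.log (C₃ / ZSb a)) ∂μ :=
          integral_mono (hf_int a).integrableOn (i12.add i3)
            (fun θ => aux_up _ _ _ (hpm_nonneg θ) (hp_pos a θ) hc)
      _ = C₃ / (C₃ / ZSb a) - ZSb a + ZSb a * Real.log (C₃ / ZSb a) := by
          rw [integral_add i12 i3, integral_sub i1 i2, integral_mul_const,
            integral_div, ← hC₃, ← hZSb]
      _ = _ := by field_simp; ring
  have hlo : ∀ a, fl a ≤ f a := by
    intro a
    have hb := hZSb_pos a
    have hz := hZS0 a
    rw [hsplit, hfl, sub_eq_add_neg]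
    gcongr
    have hc : 0 < C₄ / ZSb a := by positivity
    have i1 := (hC₄_int a).div_const (C₄ / ZSb a)
    have i2 := hZSb_int a
    have i12 := i1.sub i2
    simp only [Pi.sub_def] at i12
    have i3 := i2.mul_const (Real.log (C₄ / ZSb a))
    have h4 : (∫ θ in Sᶜ, (p a θ) ^ 2 ∂μ) / (C₄ / ZSb a) ≤ ZSb a := by
      rw [div_le_iff₀ hc]
      have : ∫ θ in Sᶜ, (p a θ) ^ 2 ∂μ ≤ C₄ := hC₄.1 ⟨a, rfl⟩
      calc _ ≤ C₄ := this
        _ = _ := by field_simp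
    have h5 : ∫ θ in Sᶜ, -(p a θ ^ 2 / (C₄ / ZSb a) - pm θ * p a θ
          + pm θ * p a θ * Real.log (C₄ / ZSb a)) ∂μ ≤
          ∫ θ in Sᶜ, pm θ * p a θ * Real.log (pm θ / p a θ) ∂μ :=
          integral_mono (i12.add i3).neg (hf_int a).integrableOn
            (fun θ => aux_lo _ _ _ (hpm_nonneg θ) (hp_pos a θ) hc)
    rw [integral_neg, integral_add i12 i3, integral_sub i1 i2, integral_mul_const,
            integral_div, ← hZSb] at h5
    linarith
  have hmain : fl αh ≤ fu αs := (hlo αh).trans ((hαh_min αs).trans (hup αs))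
  rw [hfl, hfu] at hmain
  rw [hfu] at hA2
  rw [hC₅, hC₆]
  exact aux_real C₁ C₂ C₃ C₄ γ₁ γ₂ (KL αs) (KL αh) (ZS αs) (ZS αh) (ZSb αs) (ZSb αh)
    hC₁_nonpos hC₂0 hC₃_pos hC₄_pos hγ₁_pos (hgs αs) (hgl αs) (hgs αh) (hZSe αs) (hZSe αh)
    (hKLpos αs) hγ₂C₃ hγ₂C₄ hA2 hmain
end

section
/- Under Assumption 1, suppose α*, α̂ ∈ A are such that α* minimizes KL over A (i.e., KL_{α*} ≤ KL_α for all α ∈ A), α̂ minimizes f over A (i.e., f(α̂) ≤ f(α) for all α ∈ A), Assumption 2 holds at α*, namely f_u(α*) ≤ −log(C₄/γ₁), and γ₂ ≤ min(C₃/e, C₄/e). Then KL_{α*} ≤ KL_{α̂} ≤ KL_{α*} + C·γ₂² − C′·γ₂²·log γ₂, where C = (2·log C₆)/C₅ and C′ = 2/C₅. -/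
open MeasureTheory Real

theorem arml_pt (u v c : ℝ) (hu : 0 ≤ u) (hv : 0 ≤ v) (hc : 0 < c) :
    u * v * Real.log (u / v) ≤ u ^ 2 / c - u * v + u * v * Real.log c := by
  rcases hu.eq_or_lt with rfl | hu
  · simp
  rcases hv.eq_or_lt with rfl | hv
  · simp; positivity
  have h1 : Real.log (u / v / c) ≤ u / v / c - 1 := Real.log_le_sub_one_of_pos (by positivity)
  rw [Real.log_div (by positivity) (by positivity)] at h1
  have h2 : u * v * Real.log (u / v) ≤ u * v * (u / v / c - 1 + Real.log c) := by
    apply mul_le_mul_of_nonneg_left _ (by positivity); linarith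
  have h3 : u * v * (u / v / c - 1 + Real.log c) = u ^ 2 / c - u * v + u * v * Real.log c := by
    field_simp
  linarith

theorem arml_jensen {Ω : Type*} [MeasurableSpace Ω] (ν : Measure Ω) (u v : Ω → ℝ)
    (hu : ∀ x, 0 ≤ u x) (hv : ∀ x, 0 ≤ v x)
    (huv : Integrable (fun x => u x * v x) ν) (hu2 : Integrable (fun x => u x ^ 2) ν)
    (hl : Integrable (fun x => u x * v x * Real.log (u x / v x)) ν)
    (z I : ℝ) (hz : z = ∫ x, u x * v x ∂ν) (hz0 : 0 < z) (hI : ∫ x, u x ^ 2 ∂ν ≤ I)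
    (hI0 : 0 < I) :
    ∫ x, u x * v x * Real.log (u x / v x) ∂ν ≤ z * Real.log (I / z) := by
  have hc : 0 < I / z := by positivity
  have h1 : ∫ x, u x * v x * Real.log (u x / v x) ∂ν ≤
      ∫ x, (u x ^ 2 / (I / z) - u x * v x + u x * v x * Real.log (I / z)) ∂ν :=
    integral_mono hl (((hu2.div_const _).sub huv).add (huv.mul_const _))
      (fun x => arml_pt _ _ _ (hu x) (hv x) hc)
  have hi : Integrable (fun x => u x ^ 2 / (I / z) - u x * v x) ν := (hu2.div_const _).sub huv
  rw [integral_add hi (huv.mul_const _),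
    integral_sub (hu2.div_const _) huv, integral_div, integral_mul_const, ← hz] at h1
  have h2 : (∫ x, u x ^ 2 ∂ν) / (I / z) ≤ z := by
    rw [div_le_iff₀ hc]
    have : z * (I / z) = I := by field_simp
    linarith
  linarith

theorem arml_mono (z g c : ℝ) (hz : 0 < z) (hzg : z ≤ g) (hl : 1 ≤ Real.log (c / g)) (hc : 0 < c) :
    z * Real.log (c / z) ≤ g * Real.log (c / g) := by
  have hg : 0 < g := by linarith
  have h1 : Real.log (g / z) ≤ g / z - 1 := Real.log_le_sub_one_of_pos (by positivity)
  have h2 : Real.log (c / z) = Real.log (c / g) + Real.log (g / z) := by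
    rw [← Real.log_mul (by positivity) (by positivity)]; congr 1; field_simp
  have h3 : z * Real.log (g / z) ≤ g - z := by
    calc _ ≤ z * (g / z - 1) := mul_le_mul_of_nonneg_left h1 hz.le
      _ = g - z := by field_simp
  rw [h2]
  nlinarith

theorem arml_log_ge (g c : ℝ) (hg : 0 < g) (h : g ≤ c / Real.exp 1) : 1 ≤ Real.log (c / g) := by
  rw [le_div_iff₀ (Real.exp_pos 1)] at h
  have hc : 0 < c := lt_of_lt_of_le (by positivity) h
  rw [Real.le_log_iff_exp_le (by positivity), le_div_iff₀ hg]
  linarith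

/-- **Theorem 1 (full version).** Under Assumption 1 (the main-task likelihood `pm` and every
surrogate prior `p α` are constant on the small support set `S` of the uniform true prior
`pstar`), if `α̂` minimizes the surrogate objective `f` over `A`, Assumption 2 holds at `α*`
(`f_u(α*) ≤ −log(C₄/γ₁)`), and `γ₂ ≤ min(C₃/e, C₄/e)`, then
`KL_{α*} ≤ KL_{α̂} ≤ KL_{α*} + C·γ₂² − C′·γ₂²·log γ₂` with `C = 2·log C₆/C₅`, `C′ = 2/C₅`. -/
theorem arml_theorem_informal_version
    {Ω : Type*} [MeasurableSpace Ω] (μ : Measure Ω)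
    (S : Set Ω) (hSmeas : MeasurableSet S) (hS0 : 0 < μ S) (hSfin : μ S < ⊤)
    (pstar : Ω → ℝ)
    (hpstar_in : ∀ θ ∈ S, pstar θ = ((μ S).toReal)⁻¹)
    (hpstar_out : ∀ θ ∉ S, pstar θ = 0)
    (pm : Ω → ℝ) (hpm_meas : Measurable pm) (hpm_nonneg : ∀ θ, 0 ≤ pm θ)
    {A : Type*} [Nonempty A]
    (p : A → Ω → ℝ) (hp_meas : ∀ a, Measurable (p a))
    (hp_pos : ∀ a θ, 0 < p a θ)
    (hp_dens : ∀ a, ∫ θ, p a θ ∂μ = 1)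
    -- Assumption 1: `pm` and every `p α` are constant on `S`
    (hpm_constS : ∀ θ ∈ S, ∀ θ' ∈ S, pm θ = pm θ')
    (hp_constS : ∀ a, ∀ θ ∈ S, ∀ θ' ∈ S, p a θ = p a θ')
    (θs : Ω) (hθsS : θs ∈ S) (hθs_pos : 0 < pm θs)
    (C₁ C₂ : ℝ) (hC₂ : C₂ = pm θs) (hC₁ : C₁ = Real.log (pm θs / pstar θs))
    (hC₁_nonpos : C₁ ≤ 0)
    (KL : A → ℝ) (hKL : ∀ a, KL a = Real.log (pstar θs / p a θs))
    (ZS ZSb : A → ℝ)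
    (hZS : ∀ a, ZS a = ∫ θ in S, pm θ * p a θ ∂μ)
    (hZSb : ∀ a, ZSb a = ∫ θ in Sᶜ, pm θ * p a θ ∂μ)
    (hZSb_int : ∀ a, IntegrableOn (fun θ => pm θ * p a θ) Sᶜ μ)
    (hZSb_pos : ∀ a, 0 < ZSb a)
    (γ₁ γ₂ : ℝ) (hγ₁ : IsGLB (Set.range ZSb) γ₁) (hγ₁_pos : 0 < γ₁)
    (hγ₂ : IsLUB (Set.range ZSb) γ₂)
    (C₃ : ℝ) (hC₃ : C₃ = ∫ θ in Sᶜ, (pm θ) ^ 2 ∂μ)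
    (hC₃_int : IntegrableOn (fun θ => (pm θ) ^ 2) Sᶜ μ)
    (hC₃_pos : 0 < C₃)
    (C₄ : ℝ)
    (hC₄_int : ∀ a, IntegrableOn (fun θ => (p a θ) ^ 2) Sᶜ μ)
    (hC₄ : IsLUB (Set.range fun a => ∫ θ in Sᶜ, (p a θ) ^ 2 ∂μ) C₄)
    (hC₄_pos : 0 < C₄)
    (C₅ C₆ : ℝ) (hC₅ : C₅ = C₄ * C₂ * Real.exp C₁)
    (hC₆ : C₆ = Real.sqrt (C₃ * C₄ * Real.exp (-C₁)))
    (f fu fl : A → ℝ)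
    (hf_int : ∀ a,
      Integrable (fun θ => pm θ * p a θ * Real.log (pm θ / p a θ)) μ)
    (hf : ∀ a, f a = (ZS a + ZSb a)⁻¹ *
      ∫ θ, pm θ * p a θ * Real.log (pm θ / p a θ) ∂μ)
    (hfu : ∀ a, fu a = (ZS a * (KL a + C₁) + ZSb a * Real.log (C₃ / ZSb a)) /
      (ZS a + ZSb a))
    (hfl : ∀ a, fl a = (ZS a * (KL a + C₁) - ZSb a * Real.log (C₄ / ZSb a)) /
      (ZS a + ZSb a))
    (C C' : ℝ) (hC : C = 2 * Real.log C₆ / C₅) (hC' : C' = 2 / C₅)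
    (αs αh : A)
    (hαs_min : ∀ a, KL αs ≤ KL a)
    (hαh_min : ∀ a, f αh ≤ f a)
    -- Assumption 2 at α*
    (hA2 : fu αs ≤ - Real.log (C₄ / γ₁))
    (hγ₂C₃ : γ₂ ≤ C₃ / Real.exp 1) (hγ₂C₄ : γ₂ ≤ C₄ / Real.exp 1) :
    KL αs ≤ KL αh ∧
      KL αh ≤ KL αs + C * γ₂ ^ 2 - C' * γ₂ ^ 2 * Real.log γ₂ := by
  refine ⟨hαs_min αh, ?_⟩
  have hm : 0 < (μ S).toReal := ENNReal.toReal_pos hS0.ne' hSfin.ne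
  have hps : pstar θs = ((μ S).toReal)⁻¹ := hpstar_in θs hθsS
  have hps0 : 0 < pstar θs := by rw [hps]; positivity
  have hmr : μ.real S = (μ S).toReal := rfl
  have hZS' : ∀ a, ZS a = C₂ * Real.exp (-KL a) := by
    intro a
    rw [hZS, setIntegral_congr_fun (g := fun _ => pm θs * p a θs) hSmeas
      (fun θ hθ => by simp only [hpm_constS θ hθ θs hθsS, hp_constS a θ hθ θs hθsS]),
      setIntegral_const, hKL, ← Real.log_inv, Real.exp_log (by have := hp_pos a θs; positivity),
      hC₂, hps, hmr, smul_eq_mul]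
    have := hp_pos a θs
    field_simp
  have hC₂0 : 0 < C₂ := by rw [hC₂]; exact hθs_pos
  have hZS0 : ∀ a, 0 < ZS a := fun a => by rw [hZS']; positivity
  have hKL0 : ∀ a, 0 ≤ KL a := by
    intro a
    have hi : Integrable (p a) μ := by
      by_contra h
      have := hp_dens a
      rw [integral_undef h] at this
      norm_num at this
    have h1 : ∫ θ in S, p a θ ∂μ ≤ ∫ θ, p a θ ∂μ :=
      setIntegral_le_integral hi (Filter.Eventually.of_forall fun θ => (hp_pos a θ).le)
    rw [hp_dens, setIntegral_congr_fun (g := fun _ => p a θs) hSmeas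
      (fun θ hθ => hp_constS a θ hθ θs hθsS), setIntegral_const, hmr, smul_eq_mul] at h1
    rw [hKL]
    apply Real.log_nonneg
    rw [le_div_iff₀ (hp_pos a θs), hps, one_mul, le_inv_comm₀ (hp_pos a θs) hm,
      ← one_div, le_div_iff₀ (hp_pos a θs)]
    exact h1
  have hsplit : ∀ a, ∫ θ, pm θ * p a θ * Real.log (pm θ / p a θ) ∂μ =
      ZS a * (KL a + C₁) + ∫ θ in Sᶜ, pm θ * p a θ * Real.log (pm θ / p a θ) ∂μ := by
    intro a
    rw [← integral_add_compl hSmeas (hf_int a)]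
    congr 1
    have hp0 := hp_pos a θs
    have : KL a + C₁ = Real.log (pm θs / p a θs) := by
      rw [hKL, hC₁, ← Real.log_mul (by positivity) (by positivity)]; congr 1; field_simp
    rw [this, hZS, ← integral_mul_const]
    exact setIntegral_congr_fun hSmeas
      (fun θ hθ => by simp only [hpm_constS θ hθ θs hθsS, hp_constS a θ hθ θs hθsS])
  have hfle : ∀ a, f a ≤ fu a := by
    intro a
    rw [hf, hfu, hsplit, inv_mul_eq_div]
    have := hZS0 a
    have := hZSb_pos a
    have := arml_jensen (μ.restrict Sᶜ) pm (p a) hpm_nonneg (fun θ => (hp_pos a θ).le)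
      (hZSb_int a) hC₃_int (hf_int a).integrableOn (ZSb a) C₃ (hZSb a) (hZSb_pos a) hC₃.ge hC₃_pos
    gcongr
  have hlf : ∀ a, fl a ≤ f a := by
    intro a
    rw [hf, hfl, hsplit, inv_mul_eq_div]
    have h1 := hZS0 a
    have h2 := hZSb_pos a
    have hneg : (fun θ => p a θ * pm θ * Real.log (p a θ / pm θ)) =
        fun θ => -(pm θ * p a θ * Real.log (pm θ / p a θ)) := by
      funext θ
      rw [← inv_div (pm θ), Real.log_inv]; ring
    have hcomm : (fun θ => p a θ * pm θ) = fun θ => pm θ * p a θ := by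
      funext θ; ring
    have h3 := arml_jensen (μ.restrict Sᶜ) (p a) pm (fun θ => (hp_pos a θ).le) hpm_nonneg
      (by rw [hcomm]; exact hZSb_int a) (hC₄_int a)
      (by rw [hneg]; exact (hf_int a).integrableOn.neg) (ZSb a) C₄
      (by rw [hcomm]; exact hZSb a) (hZSb_pos a) (hC₄.1 ⟨a, rfl⟩) hC₄_pos
    rw [hneg, integral_neg] at h3
    apply div_le_div_of_nonneg_right _ (by positivity)
    linarith
  have hF : fl αh ≤ fu αs := (hlf αh).trans ((hαh_min αs).trans (hfle αs))
  have hg1 : ∀ a, γ₁ ≤ ZSb a := fun a => hγ₁.1 ⟨a, rfl⟩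
  have hg2 : ∀ a, ZSb a ≤ γ₂ := fun a => hγ₂.1 ⟨a, rfl⟩
  have hγ₂0 : 0 < γ₂ := lt_of_lt_of_le (hZSb_pos αs) (hg2 αs)
  have hγ12 : γ₁ ≤ γ₂ := (hg1 αs).trans (hg2 αs)
  have hk : KL αh + C₁ ≤ fu αs := by
    rw [hfl, div_le_iff₀ (by linarith [hZS0 αh, hZSb_pos αh])] at hF
    have h1 : Real.log (C₄ / ZSb αh) ≤ Real.log (C₄ / γ₁) := by
      have := hZSb_pos αh
      have := hg1 αh
      apply Real.log_le_log (by positivity)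
      gcongr
    have h2 : ZSb αh * (fu αs + Real.log (C₄ / ZSb αh)) ≤ 0 :=
      mul_nonpos_of_nonneg_of_nonpos (hZSb_pos αh).le (by linarith)
    have h3 : ZS αh * (KL αh + C₁) ≤ ZS αh * fu αs := by linarith
    exact le_of_mul_le_mul_left h3 (hZS0 αh)
  have hC₅0 : 0 < C₅ := by rw [hC₅]; positivity
  have hx : C₅ / γ₂ ≤ ZS αs := by
    have h1 : Real.log (C₄ / γ₁) + C₁ ≤ -KL αs := by linarith [hαs_min αh]
    have h2 := Real.exp_le_exp.2 h1
    rw [Real.exp_add, Real.exp_log (by positivity)] at h2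
    rw [hZS', hC₅]
    calc C₄ * C₂ * Real.exp C₁ / γ₂ ≤ C₄ * C₂ * Real.exp C₁ / γ₁ := by gcongr
      _ = C₂ * (C₄ / γ₁ * Real.exp C₁) := by ring
      _ ≤ _ := by gcongr
  have hl3 := arml_log_ge γ₂ C₃ hγ₂0 hγ₂C₃
  have hl4 := arml_log_ge γ₂ C₄ hγ₂0 hγ₂C₄
  have hz0 := hZSb_pos αs
  have hx0 := hZS0 αs
  have hW : 0 < ZS αs + ZSb αs := by positivity
  have hd : KL αh - KL αs ≤
      (ZSb αs * (Real.log (C₃ / ZSb αs) - KL αs - C₁)) / (ZS αs + ZSb αs) := by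
    have : fu αs = KL αs + C₁ +
      (ZSb αs * (Real.log (C₃ / ZSb αs) - KL αs - C₁)) / (ZS αs + ZSb αs) := by
      rw [hfu]; field_simp; ring
    linarith
  have hnum : ZSb αs * (Real.log (C₃ / ZSb αs) - KL αs - C₁) ≤
      γ₂ * (Real.log (C₃ / γ₂) - C₁ + Real.log (C₄ / γ₂)) := by
    have h1 := arml_mono _ _ C₃ hz0 (hg2 αs) hl3 hC₃_pos
    have h2 := mul_nonneg hz0.le (hKL0 αs)
    have h3 : ZSb αs * (-C₁) ≤ γ₂ * (-C₁) :=
      mul_le_mul_of_nonneg_right (hg2 αs) (by linarith)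
    have h4 : 0 ≤ γ₂ * Real.log (C₄ / γ₂) := mul_nonneg hγ₂0.le (by linarith)
    linarith
  have hN : 0 ≤ γ₂ * (Real.log (C₃ / γ₂) - C₁ + Real.log (C₄ / γ₂)) :=
    mul_nonneg hγ₂0.le (by linarith)
  have hfin : (ZSb αs * (Real.log (C₃ / ZSb αs) - KL αs - C₁)) / (ZS αs + ZSb αs) ≤
      γ₂ * (Real.log (C₃ / γ₂) - C₁ + Real.log (C₄ / γ₂)) / (C₅ / γ₂) :=
    (div_le_div_of_nonneg_right hnum hW.le).trans
      (div_le_div_of_nonneg_left hN (by positivity) (by linarith))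
  have h6 : 2 * Real.log C₆ = Real.log C₃ + Real.log C₄ - C₁ := by
    rw [hC₆, Real.log_sqrt (by positivity), Real.log_mul (by positivity) (by positivity),
      Real.log_mul (by positivity) (by positivity), Real.log_exp]; ring
  have heq : γ₂ * (Real.log (C₃ / γ₂) - C₁ + Real.log (C₄ / γ₂)) / (C₅ / γ₂) =
      C * γ₂ ^ 2 - C' * γ₂ ^ 2 * Real.log γ₂ := by
    rw [hC, hC', h6, Real.log_div (by positivity) (by positivity),
      Real.log_div (by positivity) (by positivity)]
    field_simp
    ring
  linarith
end

section
/- Let (Ω, F, μ) be a measure space, A ∈ F, and let p, q : Ω → ℝ be measurable functions with p ≥ 0 on A and q > 0 on A. Suppose Z = ∫_A p·q dμ satisfies 0 < Z < ∞, that ∫_A q² dμ < ∞, and that the function p·q·log(p/q) (with the convention 0·log(0/q) = 0) is μ-integrable on A. Then ∫_A (p·q/Z)·log(p/q) dμ ≥ −log((∫_A q² dμ)/Z). -/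
open MeasureTheory Real

/-- **Jensen lower bound.** Writing `∫_A (p·q/Z)·log(p/q) dμ = −∫_A (p·q/Z)·log(q/p) dμ`, the
expectation of `log(q/p)` under the probability measure with density `p·q/Z` on `A` is at most
`log((∫_A q² dμ)/Z)`, giving the stated lower bound. (The convention `0·log(0/q) = 0` holds
automatically since `Real.log 0 = 0`.) -/
theorem jensen_lower_bound
    {Ω : Type*} [MeasurableSpace Ω] (μ : Measure Ω)
    (A : Set Ω) (hA : MeasurableSet A)
    (p q : Ω → ℝ) (hp_meas : Measurable p) (hq_meas : Measurable q)
    (hp_nonneg : ∀ θ ∈ A, 0 ≤ p θ) (hq_pos : ∀ θ ∈ A, 0 < q θ)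
    (Z : ℝ) (hZ : Z = ∫ θ in A, p θ * q θ ∂μ) (hZ_pos : 0 < Z)
    (hZ_int : IntegrableOn (fun θ => p θ * q θ) A μ)
    (hq2_int : IntegrableOn (fun θ => (q θ) ^ 2) A μ)
    (hlog_int : IntegrableOn (fun θ => p θ * q θ * Real.log (p θ / q θ)) A μ) :
    - Real.log ((∫ θ in A, (q θ) ^ 2 ∂μ) / Z) ≤
      ∫ θ in A, p θ * q θ / Z * Real.log (p θ / q θ) ∂μ := by
  have hS_nonneg : 0 ≤ ∫ θ in A, (q θ) ^ 2 ∂μ := integral_nonneg fun θ => sq_nonneg _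
  have hS_pos : 0 < ∫ θ in A, (q θ) ^ 2 ∂μ := by
    refine lt_of_le_of_ne hS_nonneg fun h => ?_
    have h0 := (integral_eq_zero_iff_of_nonneg (fun θ => sq_nonneg (q θ)) hq2_int).1 h.symm
    have h1 : ∫ θ in A, p θ * q θ ∂μ = 0 := by
      apply integral_eq_zero_of_ae
      filter_upwards [h0] with θ hθ
      have hq : q θ = 0 := by simpa using hθ
      simp [hq]
    rw [hZ, h1] at hZ_pos
    exact lt_irrefl _ hZ_pos
  set S := ∫ θ in A, (q θ) ^ 2 ∂μ with hS
  set c := S / Z with hc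
  have hc_pos : 0 < c := div_pos hS_pos hZ_pos
  have hi1 : IntegrableOn (fun θ => (1 - Real.log c) * (p θ * q θ)) A μ :=
    hZ_int.const_mul _
  have hi2 : IntegrableOn (fun θ => c⁻¹ * (q θ) ^ 2) A μ := hq2_int.const_mul _
  have key : ∫ θ in A, ((1 - Real.log c) * (p θ * q θ) - c⁻¹ * (q θ) ^ 2) ∂μ ≤
      ∫ θ in A, p θ * q θ * Real.log (p θ / q θ) ∂μ := by
    refine setIntegral_mono_on (hi1.sub hi2) hlog_int hA fun θ hθ => ?_
    have hq := hq_pos θ hθ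
    rcases (hp_nonneg θ hθ).eq_or_lt with hp | hp
    · rw [← hp]
      have : 0 ≤ c⁻¹ * (q θ) ^ 2 := by positivity
      simp only [zero_mul, mul_zero]
      linarith
    · have hx : 0 < q θ / p θ / c := by positivity
      have h := Real.log_le_sub_one_of_pos hx
      rw [Real.log_div (by positivity) hc_pos.ne', Real.log_div hq.ne' hp.ne'] at h
      rw [Real.log_div hp.ne' hq.ne']
      have h2 := mul_le_mul_of_nonneg_left h (mul_pos hp hq).le
      have h3 : p θ * q θ * (q θ / p θ / c - 1) = c⁻¹ * (q θ) ^ 2 - p θ * q θ := by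
        field_simp
      rw [h3] at h2
      linarith
  rw [integral_sub hi1 hi2, integral_const_mul, integral_const_mul, ← hZ, ← hS] at key
  have hcS : c⁻¹ * S = Z := by
    rw [hc]
    field_simp
  have heq : ∫ θ in A, p θ * q θ / Z * Real.log (p θ / q θ) ∂μ =
      Z⁻¹ * ∫ θ in A, p θ * q θ * Real.log (p θ / q θ) ∂μ := by
    rw [← integral_const_mul]
    congr 1
    ext θ
    ring
  rw [heq, inv_mul_eq_div, le_div_iff₀ hZ_pos]
  rw [hcS] at key
  linarith
end

section
/- Under Assumption 1, suppose moreover that for every α ∈ A the function p^m·p_α·log(p^m/p_α) is μ-integrable on Ω∖S. Then for every α ∈ A one has the sandwich bounds f_l(α) ≤ f(α) ≤ f_u(α). -/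
open MeasureTheory Real

/-- **Sandwich bounds.** Under Assumption 1, if moreover `p^m·p_α·log(p^m/p_α)` is integrable
on `Ω∖S` for every `α`, then `f_l(α) ≤ f(α) ≤ f_u(α)` for every `α`. -/
theorem f_sandwich_bounds
    {Ω : Type*} [MeasurableSpace Ω] (μ : Measure Ω)
    (S : Set Ω) (hSmeas : MeasurableSet S) (hS0 : 0 < μ S) (hSfin : μ S < ⊤)
    (pstar : Ω → ℝ)
    (hpstar_in : ∀ θ ∈ S, pstar θ = ((μ S).toReal)⁻¹)
    (hpstar_out : ∀ θ ∉ S, pstar θ = 0)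
    (pm : Ω → ℝ) (hpm_meas : Measurable pm) (hpm_nonneg : ∀ θ, 0 ≤ pm θ)
    {A : Type*} [Nonempty A]
    (p : A → Ω → ℝ) (hp_meas : ∀ a, Measurable (p a))
    (hp_pos : ∀ a θ, 0 < p a θ)
    (hp_dens : ∀ a, ∫ θ, p a θ ∂μ = 1)
    -- Assumption 1
    (hpm_constS : ∀ θ ∈ S, ∀ θ' ∈ S, pm θ = pm θ')
    (hp_constS : ∀ a, ∀ θ ∈ S, ∀ θ' ∈ S, p a θ = p a θ')
    (θs : Ω) (hθsS : θs ∈ S) (hθs_pos : 0 < pm θs)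
    (C₁ C₂ : ℝ) (hC₂ : C₂ = pm θs) (hC₁ : C₁ = Real.log (pm θs / pstar θs))
    (KL : A → ℝ) (hKL : ∀ a, KL a = Real.log (pstar θs / p a θs))
    (ZS ZSb : A → ℝ)
    (hZS : ∀ a, ZS a = ∫ θ in S, pm θ * p a θ ∂μ)
    (hZSb : ∀ a, ZSb a = ∫ θ in Sᶜ, pm θ * p a θ ∂μ)
    (hZSb_int : ∀ a, IntegrableOn (fun θ => pm θ * p a θ) Sᶜ μ)
    (hZSb_pos : ∀ a, 0 < ZSb a)
    (C₃ : ℝ) (hC₃ : C₃ = ∫ θ in Sᶜ, (pm θ) ^ 2 ∂μ)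
    (hC₃_int : IntegrableOn (fun θ => (pm θ) ^ 2) Sᶜ μ)
    (hC₃_pos : 0 < C₃)
    (C₄ : ℝ)
    (hC₄_int : ∀ a, IntegrableOn (fun θ => (p a θ) ^ 2) Sᶜ μ)
    (hC₄ : IsLUB (Set.range fun a => ∫ θ in Sᶜ, (p a θ) ^ 2 ∂μ) C₄)
    (hC₄_pos : 0 < C₄)
    (f fu fl : A → ℝ)
    (hf_int : ∀ a,
      Integrable (fun θ => pm θ * p a θ * Real.log (pm θ / p a θ)) μ)
    -- moreover, integrability of the integrand on `Ω∖S`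
    (hf_int_compl : ∀ a,
      IntegrableOn (fun θ => pm θ * p a θ * Real.log (pm θ / p a θ)) Sᶜ μ)
    (hf : ∀ a, f a = (ZS a + ZSb a)⁻¹ *
      ∫ θ, pm θ * p a θ * Real.log (pm θ / p a θ) ∂μ)
    (hfu : ∀ a, fu a = (ZS a * (KL a + C₁) + ZSb a * Real.log (C₃ / ZSb a)) /
      (ZS a + ZSb a))
    (hfl : ∀ a, fl a = (ZS a * (KL a + C₁) - ZSb a * Real.log (C₄ / ZSb a)) /
      (ZS a + ZSb a)) :
    ∀ a : A, fl a ≤ f a ∧ f a ≤ fu a := by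
  intro a
  have hlog : ∀ x c : ℝ, 0 < x → 0 < c → Real.log x ≤ Real.log c + x / c - 1 := by
    intro x c hx hc
    have h := Real.log_le_sub_one_of_pos (div_pos hx hc)
    rw [Real.log_div hx.ne' hc.ne'] at h
    linarith
  have hps : 0 < pstar θs := by
    rw [hpstar_in θs hθsS]
    exact inv_pos.mpr (ENNReal.toReal_pos hS0.ne' hSfin.ne)
  have hpa := hp_pos a θs
  have hZ := hZSb_pos a
  have hZS0 : 0 ≤ ZS a := by
    rw [hZS]
    exact integral_nonneg fun θ => mul_nonneg (hpm_nonneg θ) (hp_pos a θ).le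
  have hsum : 0 < ZS a + ZSb a := by linarith
  have hK : KL a + C₁ = Real.log (pm θs / p a θs) := by
    rw [hKL, hC₁, Real.log_div hps.ne' hpa.ne', Real.log_div hθs_pos.ne' hps.ne',
      Real.log_div hθs_pos.ne' hpa.ne']
    ring
  have hSint : ∫ θ in S, pm θ * p a θ * Real.log (pm θ / p a θ) ∂μ
      = ZS a * (KL a + C₁) := by
    rw [hK, hZS, ← integral_mul_const]
    refine setIntegral_congr_fun hSmeas fun θ hθ => ?_
    rw [hpm_constS θ hθ θs hθsS, hp_constS a θ hθ θs hθsS]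
  have hsplit := integral_add_compl hSmeas (hf_int a)
  rw [hSint] at hsplit
  have hup : ∫ θ in Sᶜ, pm θ * p a θ * Real.log (pm θ / p a θ) ∂μ
      ≤ ZSb a * Real.log (C₃ / ZSb a) := by
    have hc : 0 < C₃ / ZSb a := div_pos hC₃_pos hZ
    set c := C₃ / ZSb a with hcdef
    have h1 : ∫ θ in Sᶜ, pm θ * p a θ * Real.log (pm θ / p a θ) ∂μ
        ≤ ∫ θ in Sᶜ, (pm θ * p a θ * (Real.log c - 1) + (pm θ) ^ 2 * c⁻¹) ∂μ := by
      refine integral_mono (hf_int_compl a)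
        (((hZSb_int a).mul_const _).add (hC₃_int.mul_const _)) fun θ => ?_
      simp only
      have hq := hp_pos a θ
      rcases (hpm_nonneg θ).eq_or_lt with h0 | h0
      · simp [← h0]
      · have h := mul_le_mul_of_nonneg_left (hlog _ c (div_pos h0 hq) hc) (mul_pos h0 hq).le
        have e : pm θ * p a θ * (Real.log c + pm θ / p a θ / c - 1)
            = pm θ * p a θ * (Real.log c - 1) + (pm θ) ^ 2 * c⁻¹ := by
          field_simp
          ring
        linarith
    rw [integral_add ((hZSb_int a).mul_const _) (hC₃_int.mul_const _), integral_mul_const,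
      integral_mul_const, ← hZSb, ← hC₃] at h1
    have h2 : C₃ * c⁻¹ = ZSb a := by
      rw [hcdef]; field_simp
    linarith
  have hlo : -(ZSb a * Real.log (C₄ / ZSb a))
      ≤ ∫ θ in Sᶜ, pm θ * p a θ * Real.log (pm θ / p a θ) ∂μ := by
    have hc : 0 < C₄ / ZSb a := div_pos hC₄_pos hZ
    set c := C₄ / ZSb a with hcdef
    have h1 : ∫ θ in Sᶜ, (pm θ * p a θ * (1 - Real.log c) + (p a θ) ^ 2 * (-c⁻¹)) ∂μ
        ≤ ∫ θ in Sᶜ, pm θ * p a θ * Real.log (pm θ / p a θ) ∂μ := by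
      refine integral_mono (((hZSb_int a).mul_const _).add ((hC₄_int a).mul_const _))
        (hf_int_compl a) fun θ => ?_
      simp only
      have hq := hp_pos a θ
      rcases (hpm_nonneg θ).eq_or_lt with h0 | h0
      · simp only [← h0, zero_mul, zero_add]
        have : 0 ≤ (p a θ) ^ 2 * c⁻¹ := by positivity
        linarith
      · have h := mul_le_mul_of_nonneg_left (hlog _ c (div_pos hq h0) hc) (mul_pos h0 hq).le
        have e : pm θ * p a θ * (Real.log c + p a θ / pm θ / c - 1)
            = -(pm θ * p a θ * (1 - Real.log c) + (p a θ) ^ 2 * (-c⁻¹)) := by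
          field_simp
          ring
        have e2 : Real.log (pm θ / p a θ) = - Real.log (p a θ / pm θ) := by
          rw [← Real.log_inv, inv_div]
        rw [e2]
        linarith
    rw [integral_add ((hZSb_int a).mul_const _) ((hC₄_int a).mul_const _), integral_mul_const,
      integral_mul_const, ← hZSb] at h1
    have h2 : C₄ * c⁻¹ = ZSb a := by
      rw [hcdef]; field_simp
    have h3 : (∫ θ in Sᶜ, (p a θ) ^ 2 ∂μ) * c⁻¹ ≤ C₄ * c⁻¹ :=
      mul_le_mul_of_nonneg_right (hC₄.1 ⟨a, rfl⟩) (inv_pos.mpr hc).le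
    linarith
  rw [hfl, hfu, hf, inv_mul_eq_div, ← hsplit]
  constructor
  · apply div_le_div_of_nonneg_right _ hsum.le
    linarith
  · apply div_le_div_of_nonneg_right _ hsum.le
    linarith
end

section
/- Under Assumption 1, suppose γ₂ ≤ C₃ and γ₂ ≤ C₄, and let α* ∈ A satisfy Assumption 2: f_u(α*) ≤ −log(C₄/γ₁). Then KL_{α*} + C₁ ≤ −log(C₄/γ₁); equivalently, C₂·e^{−KL_{α*}} ≥ C₅/γ₁ where C₅ = C₄·C₂·e^{C₁}. -/
open MeasureTheory Real

/-- **Bound on `KL_{α*}` from Assumption 2.** Under Assumption 1, if `γ₂ ≤ C₃`, `γ₂ ≤ C₄`, and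
`f_u(α*) ≤ −log(C₄/γ₁)`, then `KL_{α*} + C₁ ≤ −log(C₄/γ₁)`; equivalently
`C₂·e^{−KL_{α*}} ≥ C₅/γ₁` where `C₅ = C₄·C₂·e^{C₁}`. -/
theorem assumption2_bounds_KL_star
    {Ω : Type*} [MeasurableSpace Ω] (μ : Measure Ω)
    (S : Set Ω) (hSmeas : MeasurableSet S) (hS0 : 0 < μ S) (hSfin : μ S < ⊤)
    (pstar : Ω → ℝ)
    (hpstar_in : ∀ θ ∈ S, pstar θ = ((μ S).toReal)⁻¹)
    (hpstar_out : ∀ θ ∉ S, pstar θ = 0)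
    (pm : Ω → ℝ) (hpm_meas : Measurable pm) (hpm_nonneg : ∀ θ, 0 ≤ pm θ)
    {A : Type*} [Nonempty A]
    (p : A → Ω → ℝ) (hp_meas : ∀ a, Measurable (p a))
    (hp_pos : ∀ a θ, 0 < p a θ)
    (hp_dens : ∀ a, ∫ θ, p a θ ∂μ = 1)
    -- Assumption 1
    (hpm_constS : ∀ θ ∈ S, ∀ θ' ∈ S, pm θ = pm θ')
    (hp_constS : ∀ a, ∀ θ ∈ S, ∀ θ' ∈ S, p a θ = p a θ')
    (θs : Ω) (hθsS : θs ∈ S) (hθs_pos : 0 < pm θs)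
    (C₁ C₂ : ℝ) (hC₂ : C₂ = pm θs) (hC₁ : C₁ = Real.log (pm θs / pstar θs))
    (hC₁_nonpos : C₁ ≤ 0)
    (KL : A → ℝ) (hKL : ∀ a, KL a = Real.log (pstar θs / p a θs))
    (ZS ZSb : A → ℝ)
    (hZS : ∀ a, ZS a = ∫ θ in S, pm θ * p a θ ∂μ)
    (hZSb : ∀ a, ZSb a = ∫ θ in Sᶜ, pm θ * p a θ ∂μ)
    (hZSb_int : ∀ a, IntegrableOn (fun θ => pm θ * p a θ) Sᶜ μ)
    (hZSb_pos : ∀ a, 0 < ZSb a)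
    (γ₁ γ₂ : ℝ) (hγ₁ : IsGLB (Set.range ZSb) γ₁) (hγ₁_pos : 0 < γ₁)
    (hγ₂ : IsLUB (Set.range ZSb) γ₂)
    (C₃ : ℝ) (hC₃ : C₃ = ∫ θ in Sᶜ, (pm θ) ^ 2 ∂μ)
    (hC₃_int : IntegrableOn (fun θ => (pm θ) ^ 2) Sᶜ μ)
    (hC₃_pos : 0 < C₃)
    (C₄ : ℝ)
    (hC₄_int : ∀ a, IntegrableOn (fun θ => (p a θ) ^ 2) Sᶜ μ)
    (hC₄ : IsLUB (Set.range fun a => ∫ θ in Sᶜ, (p a θ) ^ 2 ∂μ) C₄)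
    (hC₄_pos : 0 < C₄)
    (C₅ : ℝ) (hC₅ : C₅ = C₄ * C₂ * Real.exp C₁)
    (fu : A → ℝ)
    (hfu : ∀ a, fu a = (ZS a * (KL a + C₁) + ZSb a * Real.log (C₃ / ZSb a)) /
      (ZS a + ZSb a))
    (hγ₂C₃ : γ₂ ≤ C₃) (hγ₂C₄ : γ₂ ≤ C₄)
    (αs : A)
    (hA2 : fu αs ≤ - Real.log (C₄ / γ₁)) :
    KL αs + C₁ ≤ - Real.log (C₄ / γ₁) ∧
      C₅ / γ₁ ≤ C₂ * Real.exp (-(KL αs)) := by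
  have hZpos : 0 < ZS αs := by
    have h1 : ZS αs = ∫ θ in S, pm θs * p αs θs ∂μ := by
      rw [hZS]
      refine setIntegral_congr_fun hSmeas fun θ hθ => ?_
      simp only [hpm_constS θ hθ θs hθsS, hp_constS αs θ hθ θs hθsS]
    rw [h1, setIntegral_const, smul_eq_mul]
    exact mul_pos (ENNReal.toReal_pos hS0.ne' hSfin.ne) (mul_pos hθs_pos (hp_pos αs θs))
  have hb := hZSb_pos αs
  have hle1 : γ₁ ≤ ZSb αs := hγ₁.1 ⟨αs, rfl⟩
  have hle2 : ZSb αs ≤ γ₂ := hγ₂.1 ⟨αs, rfl⟩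
  have hL : 0 ≤ Real.log (C₄ / γ₁) :=
    Real.log_nonneg ((one_le_div hγ₁_pos).2 (by linarith))
  have hy : 0 ≤ Real.log (C₃ / ZSb αs) :=
    Real.log_nonneg ((one_le_div hb).2 (by linarith))
  have hmain : KL αs + C₁ ≤ - Real.log (C₄ / γ₁) := by
    rw [hfu, div_le_iff₀ (by linarith)] at hA2
    by_contra hcon
    push Not at hcon
    have h1 := mul_lt_mul_of_pos_left hcon hZpos
    have h2 := mul_nonneg hb.le hL
    have h3 := mul_nonneg hb.le hy
    nlinarith
  refine ⟨hmain, ?_⟩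
  have hC₂pos : 0 < C₂ := hC₂ ▸ hθs_pos
  have h1 : Real.exp (C₁ + Real.log (C₄ / γ₁)) ≤ Real.exp (-(KL αs)) :=
    Real.exp_le_exp.2 (by linarith)
  rw [Real.exp_add, Real.exp_log (div_pos hC₄_pos hγ₁_pos)] at h1
  calc C₅ / γ₁ = C₂ * (Real.exp C₁ * (C₄ / γ₁)) := by rw [hC₅]; ring
    _ ≤ _ := mul_le_mul_of_nonneg_left h1 hC₂pos.le
end

section
/- Under Assumption 1, let α̂ ∈ A satisfy f_l(α̂) ≤ −log(C₄/γ₁). Then KL_{α̂} + C₁ ≤ −log(C₄/Z(S̄;α̂)) ≤ −log(C₄/γ₂); equivalently, C₂·e^{−KL_{α̂}} ≥ C₅/γ₂ where C₅ = C₄·C₂·e^{C₁}. -/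
open MeasureTheory Real

/-- **Bound on `KL_{α̂}` from the lower bound `f_l`.** Under Assumption 1, if
`f_l(α̂) ≤ −log(C₄/γ₁)`, then `KL_{α̂} + C₁ ≤ −log(C₄/Z(S̄;α̂)) ≤ −log(C₄/γ₂)`; equivalently
`C₂·e^{−KL_{α̂}} ≥ C₅/γ₂` where `C₅ = C₄·C₂·e^{C₁}`. -/
theorem fl_bounds_KL_hat
    {Ω : Type*} [MeasurableSpace Ω] (μ : Measure Ω)
    (S : Set Ω) (hSmeas : MeasurableSet S) (hS0 : 0 < μ S) (hSfin : μ S < ⊤)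
    (pstar : Ω → ℝ)
    (hpstar_in : ∀ θ ∈ S, pstar θ = ((μ S).toReal)⁻¹)
    (hpstar_out : ∀ θ ∉ S, pstar θ = 0)
    (pm : Ω → ℝ) (hpm_meas : Measurable pm) (hpm_nonneg : ∀ θ, 0 ≤ pm θ)
    {A : Type*} [Nonempty A]
    (p : A → Ω → ℝ) (hp_meas : ∀ a, Measurable (p a))
    (hp_pos : ∀ a θ, 0 < p a θ)
    (hp_dens : ∀ a, ∫ θ, p a θ ∂μ = 1)
    -- Assumption 1
    (hpm_constS : ∀ θ ∈ S, ∀ θ' ∈ S, pm θ = pm θ')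
    (hp_constS : ∀ a, ∀ θ ∈ S, ∀ θ' ∈ S, p a θ = p a θ')
    (θs : Ω) (hθsS : θs ∈ S) (hθs_pos : 0 < pm θs)
    (C₁ C₂ : ℝ) (hC₂ : C₂ = pm θs) (hC₁ : C₁ = Real.log (pm θs / pstar θs))
    (hC₁_nonpos : C₁ ≤ 0)
    (KL : A → ℝ) (hKL : ∀ a, KL a = Real.log (pstar θs / p a θs))
    (ZS ZSb : A → ℝ)
    (hZS : ∀ a, ZS a = ∫ θ in S, pm θ * p a θ ∂μ)
    (hZSb : ∀ a, ZSb a = ∫ θ in Sᶜ, pm θ * p a θ ∂μ)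
    (hZSb_int : ∀ a, IntegrableOn (fun θ => pm θ * p a θ) Sᶜ μ)
    (hZSb_pos : ∀ a, 0 < ZSb a)
    (γ₁ γ₂ : ℝ) (hγ₁ : IsGLB (Set.range ZSb) γ₁) (hγ₁_pos : 0 < γ₁)
    (hγ₂ : IsLUB (Set.range ZSb) γ₂)
    (C₄ : ℝ)
    (hC₄_int : ∀ a, IntegrableOn (fun θ => (p a θ) ^ 2) Sᶜ μ)
    (hC₄ : IsLUB (Set.range fun a => ∫ θ in Sᶜ, (p a θ) ^ 2 ∂μ) C₄)
    (hC₄_pos : 0 < C₄)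
    (C₅ : ℝ) (hC₅ : C₅ = C₄ * C₂ * Real.exp C₁)
    (fl : A → ℝ)
    (hfl : ∀ a, fl a = (ZS a * (KL a + C₁) - ZSb a * Real.log (C₄ / ZSb a)) /
      (ZS a + ZSb a))
    (αh : A)
    (hflh : fl αh ≤ - Real.log (C₄ / γ₁)) :
    (KL αh + C₁ ≤ - Real.log (C₄ / ZSb αh) ∧
      - Real.log (C₄ / ZSb αh) ≤ - Real.log (C₄ / γ₂)) ∧
      C₅ / γ₂ ≤ C₂ * Real.exp (-(KL αh)) := by
  have hZSpos : 0 < ZS αh := by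
    have h : ∫ θ in S, pm θ * p αh θ ∂μ = ∫ θ in S, pm θs * p αh θs ∂μ := by
      apply setIntegral_congr_fun hSmeas
      intro θ hθ
      simp only [hpm_constS θ hθ θs hθsS, hp_constS αh θ hθ θs hθsS]
    rw [hZS, h, setIntegral_const, smul_eq_mul]
    have h1 : 0 < μ.real S := ENNReal.toReal_pos hS0.ne' hSfin.ne
    have h2 := hp_pos αh θs
    positivity
  have hZ := hZSb_pos αh
  have h1 : γ₁ ≤ ZSb αh := hγ₁.1 ⟨αh, rfl⟩
  have h2 : ZSb αh ≤ γ₂ := hγ₂.1 ⟨αh, rfl⟩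
  have hγ₂_pos : 0 < γ₂ := lt_of_lt_of_le hZ h2
  have hl1 : Real.log γ₁ ≤ Real.log (ZSb αh) := Real.log_le_log hγ₁_pos h1
  have hl2 : Real.log (ZSb αh) ≤ Real.log γ₂ := Real.log_le_log hZ h2
  have e1 := Real.log_div hC₄_pos.ne' hγ₁_pos.ne'
  have e2 := Real.log_div hC₄_pos.ne' hγ₂_pos.ne'
  have e3 := Real.log_div hC₄_pos.ne' hZ.ne'
  have hA : KL αh + C₁ ≤ - Real.log (C₄ / ZSb αh) := by
    have h3 : fl αh ≤ - Real.log (C₄ / ZSb αh) := by linarith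
    rw [hfl, div_le_iff₀ (by positivity)] at h3
    have h4 : ZS αh * (KL αh + C₁) ≤ ZS αh * (- Real.log (C₄ / ZSb αh)) := by linarith
    exact le_of_mul_le_mul_left h4 hZSpos
  have hB : - Real.log (C₄ / ZSb αh) ≤ - Real.log (C₄ / γ₂) := by linarith
  refine ⟨⟨hA, hB⟩, ?_⟩
  have h5 : Real.exp (C₁ + Real.log (C₄ / γ₂)) ≤ Real.exp (-(KL αh)) :=
    Real.exp_le_exp.2 (by linarith)
  rw [Real.exp_add, Real.exp_log (by positivity)] at h5
  have hC₂_pos : 0 < C₂ := hC₂ ▸ hθs_pos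
  calc C₅ / γ₂ = C₂ * (Real.exp C₁ * (C₄ / γ₂)) := by rw [hC₅]; ring
    _ ≤ _ := mul_le_mul_of_nonneg_left h5 hC₂_pos.le
end

section
/- Let C₁, C₂, C₃, C₄, γ₁, γ₂, K*, K̂, z*, ẑ be real numbers with C₁ ≤ 0, C₂ > 0, 0 < γ₁ ≤ γ₂, γ₂ ≤ C₃/e, γ₂ ≤ C₄/e, K* ≥ 0, K̂ ≥ 0, γ₁ ≤ z* ≤ γ₂, γ₁ ≤ ẑ ≤ γ₂. Set C₅ = C₄·C₂·e^{C₁}, C₆ = √(C₃·C₄·e^{−C₁}), x* = C₂·e^{−K*}, and x̂ = C₂·e^{−K̂}. Assume (i) K̂ + C₁ ≤ −log(C₄/γ₂), (ii) x̂ ≥ C₅/γ₂, (iii) x* ≥ C₅/γ₁, and (iv) (x̂/(x̂+ẑ))·(K̂+C₁) − (ẑ/(x̂+ẑ))·log(C₄/ẑ) ≤ (x*/(x*+z*))·(K*+C₁) + (z*/(x*+z*))·log(C₃/z*). Then K̂ ≤ K* + (2·γ₂²/C₅)·log(C₆/γ₂). -/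
open Real

theorem aux_mono_s10 {C g z : ℝ} (hz : 0 < z) (hzg : z ≤ g) (hg : g ≤ C / Real.exp 1) :
    1 ≤ Real.log (C / g) ∧ 0 ≤ Real.log (C / z) ∧
      z * Real.log (C / z) ≤ g * Real.log (C / g) := by
  have hg0 : 0 < g := lt_of_lt_of_le hz hzg
  have he := Real.exp_pos 1
  have hC : g * Real.exp 1 ≤ C := (le_div_iff₀ he).1 hg
  have hC0 : 0 < C := lt_of_lt_of_le (mul_pos hg0 he) hC
  have h1 : 1 ≤ Real.log (C / g) := by
    rw [Real.le_log_iff_exp_le (div_pos hC0 hg0), le_div_iff₀ hg0]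
    linarith
  have hsplit : Real.log (C / z) = Real.log (C / g) + Real.log (g / z) := by
    rw [Real.log_div hC0.ne' hz.ne', Real.log_div hC0.ne' hg0.ne',
      Real.log_div hg0.ne' hz.ne']
    ring
  have hnn : 0 ≤ Real.log (g / z) := Real.log_nonneg ((one_le_div hz).2 hzg)
  have hle : z * Real.log (g / z) ≤ g - z := by
    have h := mul_le_mul_of_nonneg_left (Real.log_le_sub_one_of_pos (div_pos hg0 hz)) hz.le
    have h' : z * (g / z - 1) = g - z := by field_simp
    linarith
  refine ⟨h1, by linarith, ?_⟩
  rw [hsplit]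
  nlinarith [mul_nonneg (sub_nonneg.2 hzg) (sub_nonneg.2 h1)]

theorem aux_term {D g x z L M : ℝ} (hD : 0 < D) (hz : 0 < z) (hzg : z ≤ g)
    (hx : D / g ≤ x) (hL : 0 ≤ L) (hM : z * L ≤ g * M) :
    z / (x + z) * L ≤ g ^ 2 / D * M := by
  have hg0 : 0 < g := lt_of_lt_of_le hz hzg
  have hx0 : 0 < x := lt_of_lt_of_le (div_pos hD hg0) hx
  have hDx : D ≤ x * g := (div_le_iff₀ hg0).1 hx
  have hzL : 0 ≤ z * L := mul_nonneg hz.le hL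
  rw [div_mul_eq_mul_div, div_mul_eq_mul_div, div_le_div_iff₀ (by linarith) hD]
  have e1 : z * L * D ≤ z * L * ((x + z) * g) :=
    mul_le_mul_of_nonneg_left (by nlinarith [mul_pos hz hg0]) hzL
  have e2 : z * L * ((x + z) * g) ≤ g * M * ((x + z) * g) :=
    mul_le_mul_of_nonneg_right hM (mul_pos (by linarith) hg0).le
  nlinarith

/-- **Real-number combination step** concluding the proof of the main theorem: from the bounds
(i)–(iii) and the inequality `f_l(α̂) ≤ f_u(α*)` expressed in (iv), conclude
`K̂ ≤ K* + (2γ₂²/C₅)·log(C₆/γ₂)`. -/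
theorem arml_real_combination_step
    (C₁ C₂ C₃ C₄ γ₁ γ₂ Ks Kh zs zh : ℝ)
    (hC₁ : C₁ ≤ 0) (hC₂ : 0 < C₂)
    (hγ₁_pos : 0 < γ₁) (hγ₁₂ : γ₁ ≤ γ₂)
    (hγ₂C₃ : γ₂ ≤ C₃ / Real.exp 1) (hγ₂C₄ : γ₂ ≤ C₄ / Real.exp 1)
    (hKs : 0 ≤ Ks) (hKh : 0 ≤ Kh)
    (hzs₁ : γ₁ ≤ zs) (hzs₂ : zs ≤ γ₂) (hzh₁ : γ₁ ≤ zh) (hzh₂ : zh ≤ γ₂)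
    (C₅ C₆ xs xh : ℝ)
    (hC₅ : C₅ = C₄ * C₂ * Real.exp C₁)
    (hC₆ : C₆ = Real.sqrt (C₃ * C₄ * Real.exp (-C₁)))
    (hxs : xs = C₂ * Real.exp (-Ks)) (hxh : xh = C₂ * Real.exp (-Kh))
    (h1 : Kh + C₁ ≤ - Real.log (C₄ / γ₂))
    (h2 : C₅ / γ₂ ≤ xh)
    (h3 : C₅ / γ₁ ≤ xs)
    (h4 : xh / (xh + zh) * (Kh + C₁) - zh / (xh + zh) * Real.log (C₄ / zh) ≤
      xs / (xs + zs) * (Ks + C₁) + zs / (xs + zs) * Real.log (C₃ / zs)) :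
    Kh ≤ Ks + 2 * γ₂ ^ 2 / C₅ * Real.log (C₆ / γ₂) := by
  have he := Real.exp_pos 1
  have hzs : 0 < zs := by linarith
  have hzh : 0 < zh := by linarith
  have hg : 0 < γ₂ := by linarith
  have hC₃ : 0 < C₃ := lt_of_lt_of_le (mul_pos hg he) ((le_div_iff₀ he).1 hγ₂C₃)
  have hC₄ : 0 < C₄ := lt_of_lt_of_le (mul_pos hg he) ((le_div_iff₀ he).1 hγ₂C₄)
  have hD : 0 < C₅ := by rw [hC₅]; positivity
  have hxs0 : 0 < xs := by rw [hxs]; positivity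
  have hxh0 : 0 < xh := by rw [hxh]; positivity
  have h3' : C₅ / γ₂ ≤ xs :=
    le_trans (div_le_div_of_nonneg_left hD.le hγ₁_pos hγ₁₂) h3
  obtain ⟨a1, a2, a3⟩ := aux_mono_s10 hzh hzh₂ hγ₂C₄
  obtain ⟨b1, b2, b3⟩ := aux_mono_s10 hzs hzs₂ hγ₂C₃
  have t1 := aux_term hD hzh hzh₂ h2 a2 a3
  have t2 := aux_term (L := Real.log (C₃ / zs) - C₁) (M := Real.log (C₃ / γ₂) - C₁)
    hD hzs hzs₂ h3' (by linarith)
    (by nlinarith [mul_nonneg (sub_nonneg.2 hzs₂) (neg_nonneg.2 hC₁)])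
  have hlog : 2 * Real.log (C₆ / γ₂) =
      Real.log (C₃ / γ₂) + Real.log (C₄ / γ₂) - C₁ := by
    have hE := Real.exp_pos (-C₁)
    have hpos : 0 < C₃ * C₄ * Real.exp (-C₁) := by positivity
    rw [hC₆, Real.log_div (Real.sqrt_pos.2 hpos).ne' hg.ne', Real.log_sqrt hpos.le,
      Real.log_mul (by positivity) hE.ne', Real.log_mul hC₃.ne' hC₄.ne', Real.log_exp,
      Real.log_div hC₃.ne' hg.ne', Real.log_div hC₄.ne' hg.ne']
    ring
  have hgoal : 2 * γ₂ ^ 2 / C₅ * Real.log (C₆ / γ₂) =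
      γ₂ ^ 2 / C₅ * Real.log (C₄ / γ₂) + γ₂ ^ 2 / C₅ * (Real.log (C₃ / γ₂) - C₁) := by
    have : 2 * γ₂ ^ 2 / C₅ * Real.log (C₆ / γ₂) =
      γ₂ ^ 2 / C₅ * (2 * Real.log (C₆ / γ₂)) := by ring
    rw [this, hlog]; ring
  have q1 : xh / (xh + zh) = 1 - zh / (xh + zh) := by
    have : xh + zh ≠ 0 := by positivity
    field_simp; ring
  have q2 : xs / (xs + zs) = 1 - zs / (xs + zs) := by
    have : xs + zs ≠ 0 := by positivity
    field_simp; ring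
  rw [q1, q2] at h4
  have p1 : 0 ≤ zh / (xh + zh) := by positivity
  have p2 : 0 ≤ zs / (xs + zs) := by positivity
  have r1 : zh / (xh + zh) * (Kh + C₁) ≤ 0 :=
    mul_nonpos_of_nonneg_of_nonpos p1 (by linarith)
  have r2 : 0 ≤ zs / (xs + zs) * Ks := mul_nonneg p2 hKs
  rw [hgoal]
  linarith
end
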